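/- Let a, b be distinct square-free integers not equal to 0 or 1 such that Q = ℚ(√a,√b) is a biquadratic field. Then 𝓕_{4,a}(a,b) ≠ ∅ if and only if b is a norm from ℚ(√a), i.e., if and only if there exist rational numbers x, y with x² − a·y² = b. -/

import Mathlib

/-!
Throughout, `K` is a quartic field containing `s = √a`, written `K = ℚ(β)` with
`β² = p + q√a`, and `β'` is a square root of the conjugate `p - q√a`. Put `c = p² - a q²`, the norm
of `p + q√a`; then `(ββ')² = c`. If none of `a`, `c`, `ac` is a square, then the Galois closure of
`K` is `ℚ(β, β')`, of degree 8. These data are recorded in the structure `Kummer`, and the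
computation works over any base field of characteristic zero.

* A quartic field is a `D₄`-field exactly when its Galois closure has degree 8
  (`isD4Quartic_iff`): the Galois group acts faithfully on the at most four embeddings, so it is a
  Sylow 2-subgroup of `S₄`, and `D₄` is one as well.
* The situation is symmetric (`Kummer.dual`): `(β ± β')² = 2p ± 2ββ'`, so `β + β'` generates another
  `D₄`-field inside the same Galois closure, with quadratic subfield `ℚ(√c)`. Conversely, every
  `D₄`-field inside `ℚ(β, β')` contains `√a` or `ββ' = √c` (`Kummer.s_mem_or_γ_mem`), and it has
  only one quadratic subfield, as otherwise it would be biquadratic, hence normal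
  (`IsOctic.quadratic_unique`). So the extended quadratic fields of `K` are `ℚ(√a)` and `ℚ(√c)`.

If `K ∈ 𝓕_{4,a}(a,b)`, then `K` arises from such data (`IsOctic.exists_kummer`) and
`ℚ(√c) = ℚ(√b)`; thus `c = b v²` with `v ≠ 0`, and `b` is the norm of `(p + q√a) / v`. If instead
`b = x² - a y²`, then `p = x`, `q = y` gives `c = b`, and `ℚ(β)` lies in `𝓕_{4,a}(a,b)`.
-/

open IntermediateField

noncomputable section

abbrev Qbar : Type := AlgebraicClosure ℚ

noncomputable def galCl (K : IntermediateField ℚ Qbar) : IntermediateField ℚ Qbar :=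
  normalClosure ℚ K Qbar

def IsD4Quartic (K : IntermediateField ℚ Qbar) : Prop :=
  Module.finrank ℚ K = 4 ∧
    Nonempty ((galCl K ≃ₐ[ℚ] galCl K) ≃* DihedralGroup 4)

open scoped Classical in
noncomputable def absDisc (K : IntermediateField ℚ Qbar) : ℕ :=
  if h : FiniteDimensional ℚ K then
    haveI := h
    haveI : NumberField K := ⟨⟩
    (NumberField.discr K).natAbs
  else 0

def F4 (Q : IntermediateField ℚ Qbar) : Set (IntermediateField ℚ Qbar) :=
  {K | IsD4Quartic K ∧ Q ≤ galCl K}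

def F4X (Q : IntermediateField ℚ Qbar) (X : ℝ) : Set (IntermediateField ℚ Qbar) :=
  {K | K ∈ F4 Q ∧ (absDisc K : ℝ) ≤ X}

noncomputable def torsionCount (K : IntermediateField ℚ Qbar) (ℓ : ℕ) : ℕ :=
  Nat.card {x : ClassGroup (NumberField.RingOfIntegers K) // x ^ ℓ = 1}

/-- `F` is an extended quadratic field of the `D₄`-quartic field `K`: a quadratic
subfield of the Galois closure `K̃` which occurs as the (unique) quadratic subfield of
some `D₄`-quartic field contained in `K̃`. -/
def ExtendedQuadratic (K F : IntermediateField ℚ Qbar) : Prop :=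
  F ≤ galCl K ∧ Module.finrank ℚ F = 2 ∧
    ∃ K' : IntermediateField ℚ Qbar, IsD4Quartic K' ∧ K' ≤ galCl K ∧ F ≤ K'

/-- The family `𝓕₄(a,b)` (for fixed square roots `sa` of `a` and `sb` of `b`): the
`D₄`-quartic fields whose Galois closure contains `ℚ(√a,√b)` and whose extended
quadratic fields are exactly `ℚ(√a)` and `ℚ(√b)`. -/
def F4ab (sa sb : Qbar) : Set (IntermediateField ℚ Qbar) :=
  {K | IsD4Quartic K ∧ adjoin ℚ {sa, sb} ≤ galCl K ∧
    ∀ F : IntermediateField ℚ Qbar,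
      ExtendedQuadratic K F ↔ (F = adjoin ℚ {sa} ∨ F = adjoin ℚ {sb})}

/-- The subfamily `𝓕_{4,a}(a,b)`: fields in `𝓕₄(a,b)` whose unique quadratic subfield
is `ℚ(√a)`. -/
def F4a (sa sb : Qbar) : Set (IntermediateField ℚ Qbar) :=
  {K | K ∈ F4ab sa sb ∧ adjoin ℚ {sa} ≤ K ∧
    ∀ F : IntermediateField ℚ Qbar,
      F ≤ K → Module.finrank ℚ F = 2 → F = adjoin ℚ {sa}}

/-! ### Groups of order 8 acting faithfully on four points -/

/-- The symmetries of the square, as permutations of its vertices `ZMod 4`. -/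
theorem dihedral_embeds : ∃ f : DihedralGroup 4 →* Equiv.Perm (Fin 4), Function.Injective f := by
  let f : DihedralGroup 4 →* Equiv.Perm (ZMod 4) :=
    { toFun := fun g => match g with
        | .r i => ⟨fun x => x + i, fun x => x - i, fun x => by ring, fun x => by ring⟩
        | .sr i => ⟨fun x => -x - i, fun x => -x - i, fun x => by ring, fun x => by ring⟩
      map_one' := by decide
      map_mul' := by decide }
  exact ⟨f, (injective_iff_map_eq_one f).2 (by decide)⟩

/-- Both `G` and `D₄` embed in `S₄` as Sylow 2-subgroups, and those are conjugate. -/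
theorem mulEquiv_dihedral_of_card {G X : Type*} [Group G] [Finite X] (hG : Nat.card G = 8)
    (hX : Nat.card X ≤ 4) (f : G →* Equiv.Perm X) (hf : Function.Injective f) :
    Nonempty (G ≃* DihedralGroup 4) := by
  have : Nonempty (X ↪ Fin 4) := by
    have := Fintype.ofFinite X
    rw [Function.Embedding.nonempty_iff_card_le]
    simpa [Nat.card_eq_fintype_card] using hX
  obtain ⟨e⟩ := this
  set f₁ : G →* Equiv.Perm (Fin 4) := (Equiv.Perm.viaEmbeddingHom e).comp f
  have hf₁ : Function.Injective f₁ := (Equiv.Perm.viaEmbeddingHom_injective e).comp hf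
  obtain ⟨f₂, hf₂⟩ := dihedral_embeds
  have h24 : Nat.card (Equiv.Perm (Fin 4)) = 24 := by
    rw [Nat.card_perm]; simp [Nat.factorial]
  have hfac : Nat.factorization 24 2 = 3 := by
    rw [show 24 = 2 ^ 3 * 3 by norm_num, Nat.factorization_mul (by norm_num) (by norm_num),
      Nat.factorization_pow]
    simp [Nat.Prime.factorization Nat.prime_two, Nat.Prime.factorization Nat.prime_three]
  have : Fact (Nat.Prime 2) := ⟨Nat.prime_two⟩
  let e₁ := MonoidHom.ofInjective hf₁
  let e₂ := MonoidHom.ofInjective hf₂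
  let P₁ : Sylow 2 (Equiv.Perm (Fin 4)) := Sylow.ofCard f₁.range (by
    rw [h24, hfac, ← Nat.card_congr e₁.toEquiv, hG]; norm_num)
  let P₂ : Sylow 2 (Equiv.Perm (Fin 4)) := Sylow.ofCard f₂.range (by
    rw [h24, hfac, ← Nat.card_congr e₂.toEquiv, DihedralGroup.nat_card]; norm_num)
  exact ⟨e₁.trans ((Sylow.equiv P₁ P₂).trans e₂.symm)⟩

/-! ### The Galois group of the normal closure of a quartic field -/

section Generic

variable {k Ω : Type*} [Field k] [Field Ω] [Algebra k Ω]

/-- The normal closure is generated by the images of `K`, so an automorphism fixing all of them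
is trivial. -/
theorem galAct_faithful (K : IntermediateField k Ω)
    (g : normalClosure k K Ω ≃ₐ[k] normalClosure k K Ω)
    (hg : ∀ (φ : K →ₐ[k] normalClosure k K Ω) (x : K), g (φ x) = φ x) : g = 1 := by
  have hle : normalClosure k K Ω ≤
      IntermediateField.lift (IntermediateField.fixedField (Subgroup.zpowers g)) := by
    rw [normalClosure_le_iff]
    rintro f _ ⟨x, rfl⟩
    have h1 : g ((normalClosure.algHomEquiv k K Ω).symm f x)
      = (normalClosure.algHomEquiv k K Ω).symm f x := hg _ x
    change (((normalClosure.algHomEquiv k K Ω).symm f x : normalClosure k K Ω) : Ω) ∈ _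
    rw [IntermediateField.mem_lift, IntermediateField.mem_fixedField_iff]
    intro h hh
    have : Subgroup.zpowers g ≤ MulAction.stabilizer _
      ((normalClosure.algHomEquiv k K Ω).symm f x) := by
      rw [Subgroup.zpowers_le]; exact h1
    exact this hh
  ext x
  have := hle x.2
  rw [IntermediateField.mem_lift, IntermediateField.mem_fixedField_iff] at this
  rw [this g (Subgroup.mem_zpowers g)]; rfl

variable [CharZero k] [Normal k Ω]

theorem gal_dihedral (K : IntermediateField k Ω) (h4 : Module.finrank k K = 4)
    (h8 : Module.finrank k (normalClosure k K Ω) = 8) :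
    Nonempty ((normalClosure k K Ω ≃ₐ[k] normalClosure k K Ω) ≃* DihedralGroup 4) := by
  have : FiniteDimensional k K := Module.finite_of_finrank_pos (by omega)
  have : FiniteDimensional k (normalClosure k K Ω) := Module.finite_of_finrank_pos (by omega)
  have : IsGalois k (normalClosure k K Ω) := ⟨⟩
  let L := normalClosure k K Ω
  let act : (L ≃ₐ[k] L) →* Equiv.Perm (K →ₐ[k] L) :=
    { toFun := fun g =>
        ⟨fun φ => g.toAlgHom.comp φ, fun φ => g.symm.toAlgHom.comp φ,
          fun φ => by ext x; simp, fun φ => by ext x; simp⟩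
      map_one' := by ext φ x; rfl
      map_mul' := fun g h => by ext φ x; rfl }
  refine mulEquiv_dihedral_of_card (X := K →ₐ[k] L)
    (by rw [IsGalois.card_aut_eq_finrank, h8]) ?_ act ?_
  -- There are exactly `[K : k]` embeddings, since all minimal polynomials split in `Ω`.
  · rw [Nat.card_congr (normalClosure.algHomEquiv k K Ω), Nat.card_eq_fintype_card, ← h4]
    rw [AlgHom.card_of_splits]
    intro x
    have h := Normal.splits (F := k) (K := Ω) inferInstance (x : Ω)
    rwa [show (x : Ω) = algebraMap K Ω x from rfl,
      minpoly.algebraMap_eq (algebraMap K Ω).injective] at h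
  · rw [injective_iff_map_eq_one]
    exact fun g hg => galAct_faithful K g fun φ x => DFunLike.congr_fun (Equiv.congr_fun hg φ) x

theorem finrank_of_gal_dihedral (K : IntermediateField k Ω) (h4 : Module.finrank k K = 4)
    (h : Nonempty ((normalClosure k K Ω ≃ₐ[k] normalClosure k K Ω) ≃* DihedralGroup 4)) :
    Module.finrank k (normalClosure k K Ω) = 8 := by
  obtain ⟨e⟩ := h
  have : FiniteDimensional k K := Module.finite_of_finrank_pos (by omega)
  have : IsGalois k (normalClosure k K Ω) := ⟨⟩
  rw [← IsGalois.card_aut_eq_finrank, Nat.card_congr e.toEquiv, DihedralGroup.nat_card]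

end Generic

/-- The two `ℚ`-algebra structures on `Qbar`, one from the algebraic closure and one from
characteristic zero, agree only propositionally. Normality is known for the first and needed for
the second. -/
instance : Normal ℚ Qbar := by
  have h := @IsAlgClosure.normal ℚ (AlgebraicClosure ℚ) _ _
    (AlgebraicClosure.instAlgebra ℚ) inferInstance
  convert h
  exact Subsingleton.elim _ _

/-- A quartic field is a `D₄`-quartic field if and only if its Galois closure has degree 8. -/
theorem isD4Quartic_iff (K : IntermediateField ℚ Qbar) : IsD4Quartic K ↔
    Module.finrank ℚ K = 4 ∧ Module.finrank ℚ (normalClosure ℚ K Qbar) = 8 :=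
  and_congr_right fun h4 => ⟨finrank_of_gal_dihedral K h4, gal_dihedral K h4⟩

set_option linter.unusedSectionVars false

/-! ### Adjoining a square root -/

section Biquadratic

variable {k Ω : Type*} [Field k] [CharZero k] [Field Ω] [Algebra k Ω] [Normal k Ω]

theorem mem_sup_sqrt {M : IntermediateField k Ω} {s : Ω} (hs : s ^ 2 ∈ M) {x : Ω}
    (hx : x ∈ M ⊔ adjoin k {s}) : ∃ u ∈ M, ∃ v ∈ M, x = u + v * s := by
  rw [← restrictScalars_adjoin_eq_sup, mem_restrictScalars] at hx
  have hInt : IsIntegral M s := (Normal.isIntegral (F := k) inferInstance s).tower_top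
  change x ∈ (adjoin M {s}).toSubalgebra at hx
  rw [adjoin_simple_toSubalgebra_of_isAlgebraic hInt.isAlgebraic] at hx
  induction hx using Algebra.adjoin_induction with
  | mem y hy => exact ⟨0, M.zero_mem, 1, M.one_mem, by rw [hy]; ring⟩
  | algebraMap r => exact ⟨r, r.2, 0, M.zero_mem, by rw [zero_mul, add_zero]; rfl⟩
  | add y z _ _ hy hz =>
    obtain ⟨u, hu, v, hv, rfl⟩ := hy
    obtain ⟨u', hu', v', hv', rfl⟩ := hz
    exact ⟨_, add_mem hu hu', _, add_mem hv hv', by ring⟩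
  | mul y z _ _ hy hz =>
    obtain ⟨u, hu, v, hv, rfl⟩ := hy
    obtain ⟨u', hu', v', hv', rfl⟩ := hz
    exact ⟨u * u' + v * v' * s ^ 2, add_mem (mul_mem hu hu') (mul_mem (mul_mem hv hv') hs),
      u * v' + v * u', add_mem (mul_mem hu hv') (mul_mem hv hu'), by ring⟩

theorem finrank_sup_sqrt {M : IntermediateField k Ω} {s : Ω} (hs : s ^ 2 ∈ M) (hsM : s ∉ M) :
    Module.finrank k (M ⊔ adjoin k {s} : IntermediateField k Ω) = 2 * Module.finrank k M := by
  rw [← restrictScalars_adjoin_eq_sup]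
  have hInt : IsIntegral M s := (Normal.isIntegral (F := k) inferInstance s).tower_top
  have h2 : Module.finrank M (adjoin M {s}) = 2 := by
    rw [adjoin.finrank hInt]
    have hle : (minpoly M s).natDegree ≤ 2 := by
      have h0 : (Polynomial.X ^ 2 - Polynomial.C (⟨s ^ 2, hs⟩ : M)) ≠ 0 :=
        Polynomial.X_pow_sub_C_ne_zero (by norm_num) _
      refine (Polynomial.natDegree_le_of_dvd (minpoly.dvd M s ?_) h0).trans
        (by rw [Polynomial.natDegree_X_pow_sub_C])
      simp only [map_sub, map_pow, Polynomial.aeval_X, Polynomial.aeval_C]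
      exact sub_self _
    have hpos := minpoly.natDegree_pos hInt
    have hne : (minpoly M s).natDegree ≠ 1 := by
      rw [Ne, minpoly.natDegree_eq_one_iff]
      rintro ⟨y, hy⟩
      exact hsM (hy ▸ y.2)
    omega
  change Module.finrank k (adjoin M {s}) = _
  rw [← Module.finrank_mul_finrank k M (adjoin M {s}), h2, mul_comm]

theorem notMem_bot_of_sq {a : k} {s : Ω} (hs : s ^ 2 = algebraMap k Ω a) (ha : ¬IsSquare a) :
    s ∉ (⊥ : IntermediateField k Ω) := by
  rintro ⟨t, rfl⟩
  refine ha ⟨t, (algebraMap k Ω).injective ?_⟩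
  rw [← hs, map_mul, sq]; rfl

theorem mem_adjoin_sqrt {a : k} {s : Ω} (hs : s ^ 2 = algebraMap k Ω a) {x : Ω}
    (hx : x ∈ adjoin k {s}) : ∃ u v : k, x = algebraMap k Ω u + algebraMap k Ω v * s := by
  rw [← bot_sup_eq (adjoin k {s})] at hx
  obtain ⟨_, ⟨u, rfl⟩, _, ⟨v, rfl⟩, rfl⟩ := mem_sup_sqrt (hs ▸ ⟨a, rfl⟩) hx
  exact ⟨u, v, rfl⟩

theorem finrank_adjoin_sqrt {a : k} {s : Ω} (hs : s ^ 2 = algebraMap k Ω a) (ha : ¬IsSquare a) :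
    Module.finrank k (adjoin k {s}) = 2 := by
  rw [← bot_sup_eq (adjoin k {s}), finrank_sup_sqrt (hs ▸ ⟨a, rfl⟩) (notMem_bot_of_sq hs ha),
    IntermediateField.finrank_bot]

/-- Coordinates with respect to `1, s` are unique. -/
theorem coord_eq {s : Ω} (hs : s ∉ (⊥ : IntermediateField k Ω)) {u v u' v' : k}
    (h : algebraMap k Ω u + algebraMap k Ω v * s = algebraMap k Ω u' + algebraMap k Ω v' * s) :
    u = u' ∧ v = v' := by
  have hv : v = v' := by
    by_contra hne
    have hne' : algebraMap k Ω (v - v') ≠ 0 := by simpa [sub_eq_zero] using hne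
    refine hs ⟨(u' - u) / (v - v'), ?_⟩
    change algebraMap k Ω ((u' - u) / (v - v')) = s
    rw [map_div₀, div_eq_iff hne', map_sub, map_sub]
    linear_combination -h
  subst hv
  exact ⟨(algebraMap k Ω).injective (by simpa using h), rfl⟩

/-- If `√c = u + v√a` then `2uv = 0`, which makes `c` or `ac` a square. -/
theorem sqrt_notMem_adjoin_sqrt {a c : k} {s γ : Ω} (hs : s ^ 2 = algebraMap k Ω a)
    (hγ : γ ^ 2 = algebraMap k Ω c) (ha : ¬IsSquare a) (hc : ¬IsSquare c)
    (hac : ¬IsSquare (a * c)) : γ ∉ adjoin k {s} := by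
  intro h
  obtain ⟨u, v, rfl⟩ := mem_adjoin_sqrt hs h
  obtain ⟨h1, h2⟩ := coord_eq (notMem_bot_of_sq hs ha) (u := u ^ 2 + a * v ^ 2) (v := 2 * u * v)
    (u' := c) (v' := 0) (by
      simp only [map_add, map_mul, map_pow, map_ofNat, map_zero]
      linear_combination hγ - algebraMap k Ω v ^ 2 * hs)
  rcases mul_eq_zero.1 h2 with h3 | rfl
  · have hu : u = 0 := by simpa using h3
    subst hu
    exact hac ⟨a * v, by rw [← h1]; ring⟩
  · exact hc ⟨u, by rw [← h1]; ring⟩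

/-! ### A pair of conjugate square roots over a quadratic field -/

/-- The data presenting a quartic field of dihedral type: `s` is a square root of `a`, and `β`, `β'`
are square roots of the conjugate elements `p + q s`, `p - q s`, whose product is
`c = p² - a q²`. The conditions that `a`, `c` and `ac` are not squares say that `s` and `ββ'`
generate a biquadratic field; that `k(β)` has degree 4, with normal closure `k(β, β')` of degree 8,
is a consequence. The square roots `s` and `β'` are arguments rather than existentially quantified,
so that `ββ'` is a definite square root of `c`. -/
structure Kummer (a p q : k) (s β β' : Ω) : Prop where
  hs : s ^ 2 = algebraMap k Ω a
  hβ : β ^ 2 = algebraMap k Ω p + algebraMap k Ω q * s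
  hβ' : β' ^ 2 = algebraMap k Ω p - algebraMap k Ω q * s
  ha : ¬IsSquare a
  hc : ¬IsSquare (p ^ 2 - a * q ^ 2)
  hac : ¬IsSquare (a * (p ^ 2 - a * q ^ 2))

namespace Kummer

variable {a p q : k} {s β β' : Ω}

/-- Exchanging `β` and `β'` amounts to replacing `q` by `-q`. -/
theorem swap (D : Kummer a p q s β β') : Kummer a p (-q) s β' β where
  hs := D.hs
  hβ := by rw [D.hβ', map_neg]; ring
  hβ' := by rw [D.hβ, map_neg]; ring
  ha := D.ha
  hc := by rw [neg_sq]; exact D.hc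
  hac := by rw [neg_sq]; exact D.hac

theorem q_ne_zero (D : Kummer a p q s β β') : q ≠ 0 := by
  rintro rfl
  exact D.hc ⟨p, by ring⟩

/-- The product `γ = ββ'` is a square root of the norm of `p + q s`. -/
theorem hγ (D : Kummer a p q s β β') :
    (β * β') ^ 2 = algebraMap k Ω (p ^ 2 - a * q ^ 2) := by
  rw [mul_pow, D.hβ, D.hβ', map_sub, map_mul, map_pow, map_pow]
  linear_combination - algebraMap k Ω q ^ 2 * D.hs

theorem γ_ne_zero (D : Kummer a p q s β β') : β * β' ≠ 0 := by
  intro h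
  have := D.hγ
  rw [h, zero_pow two_ne_zero, eq_comm, map_eq_zero] at this
  exact D.hc (this ▸ IsSquare.zero)

/-- Duality: `(β ± β')² = 2p ± 2ββ'`, so `β + β'` and `β - β'` are conjugate square roots over
`k(ββ')`, and the norm of `2p + 2ββ'` is `(2p)² - 4c = a (2q)²`. Thus `a` and `c` exchange
their roles up to squares. -/
theorem dual (D : Kummer a p q s β β') :
    Kummer (p ^ 2 - a * q ^ 2) (2 * p) 2 (β * β') (β + β') (β - β') where
  hs := D.hγ
  hβ := by
    simp only [map_mul, map_ofNat]
    linear_combination D.hβ + D.hβ'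
  hβ' := by
    simp only [map_mul, map_ofNat]
    linear_combination D.hβ + D.hβ'
  ha := D.hc
  hc := by
    have h2 : (2 * q) ≠ 0 := mul_ne_zero two_ne_zero D.q_ne_zero
    rintro ⟨t, ht⟩
    refine D.ha ⟨t / (2 * q), ?_⟩
    have hq := D.q_ne_zero
    field_simp
    linear_combination ht
  hac := by
    have h2 : (2 * q) ≠ 0 := mul_ne_zero two_ne_zero D.q_ne_zero
    rintro ⟨t, ht⟩
    refine D.hac ⟨t / (2 * q), ?_⟩
    have hq := D.q_ne_zero
    field_simp
    linear_combination ht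

/-- Were `β = u + v s`, the norm `c` of `β²` would be the square of `u² - a v²`. -/
theorem β_notMem (D : Kummer a p q s β β') : β ∉ adjoin k {s} := by
  intro h
  obtain ⟨u, v, hb⟩ := mem_adjoin_sqrt D.hs h
  obtain ⟨h1, h2⟩ := coord_eq (notMem_bot_of_sq D.hs D.ha) (u := u ^ 2 + a * v ^ 2)
    (v := 2 * u * v) (u' := p) (v' := q) (by
      simp only [map_add, map_mul, map_pow, map_ofNat]
      linear_combination D.hβ - algebraMap k Ω v ^ 2 * D.hs
        - (β + algebraMap k Ω u + algebraMap k Ω v * s) * hb)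
  exact D.hc ⟨u ^ 2 - a * v ^ 2, by rw [← h1, ← h2]; ring⟩

theorem γ_notMem (D : Kummer a p q s β β') : β * β' ∉ adjoin k {s} :=
  sqrt_notMem_adjoin_sqrt D.hs D.hγ D.ha D.hc D.hac

theorem s_mem_of_β_mem (D : Kummer a p q s β β') {M : IntermediateField k Ω} (hM : β ∈ M) :
    s ∈ M := by
  have hq : algebraMap k Ω q ≠ 0 := by simpa using D.q_ne_zero
  rw [show s = (β ^ 2 - algebraMap k Ω p) / algebraMap k Ω q by
    rw [eq_div_iff hq, D.hβ]; ring]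
  exact div_mem (sub_mem (pow_mem hM 2) (M.algebraMap_mem p)) (M.algebraMap_mem q)

theorem adjoin_β (D : Kummer a p q s β β') :
    adjoin k {β} = adjoin k {s} ⊔ adjoin k {β} := by
  rw [eq_comm, sup_eq_right, adjoin_simple_le_iff]
  exact D.s_mem_of_β_mem (mem_adjoin_simple_self k β)

theorem β_sq_mem (D : Kummer a p q s β β') : β ^ 2 ∈ adjoin k {s} := by
  rw [D.hβ]
  exact add_mem (_root_.algebraMap_mem _ p)
    (mul_mem (_root_.algebraMap_mem _ q) (mem_adjoin_simple_self k s))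

theorem finrank_adjoin_β (D : Kummer a p q s β β') : Module.finrank k (adjoin k {β}) = 4 := by
  rw [D.adjoin_β, finrank_sup_sqrt D.β_sq_mem D.β_notMem, finrank_adjoin_sqrt D.hs D.ha]

/-- If `β' = u + vβ` with `u, v ∈ k(s)`, then `u = 0` or `v = 0`, because `β'² ∈ k(s)` but
`β ∉ k(s)`; so `ββ'` or `β'` would lie in `k(s)`. -/
theorem β'_notMem (D : Kummer a p q s β β') : β' ∉ adjoin k {β} := by
  rw [D.adjoin_β]
  intro h
  obtain ⟨u, hu, v, hv, hb⟩ := mem_sup_sqrt D.β_sq_mem h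
  have h2 : u = 0 ∨ v = 0 := by
    by_contra! hne
    refine D.β_notMem ?_
    have h2 : (2 : Ω) ≠ 0 := by
      have := charZero_of_injective_algebraMap (algebraMap k Ω).injective
      exact two_ne_zero
    rw [show β = (β' ^ 2 - u ^ 2 - v ^ 2 * β ^ 2) / (2 * u * v) by
      rw [eq_div_iff (mul_ne_zero (mul_ne_zero h2 hne.1) hne.2), hb]; ring]
    exact div_mem (sub_mem (sub_mem D.swap.β_sq_mem (pow_mem hu 2))
      (mul_mem (pow_mem hv 2) D.β_sq_mem)) (mul_mem (mul_mem (ofNat_mem _ 2) hu) hv)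
  rcases h2 with rfl | rfl
  · refine D.γ_notMem ?_
    rw [hb, show β * (0 + v * β) = v * β ^ 2 by ring]
    exact mul_mem hv D.β_sq_mem
  · refine D.swap.β_notMem ?_
    rw [hb]; simpa using hu

theorem adjoin_pair :
    (adjoin k {β, β'} : IntermediateField k Ω) = adjoin k {β} ⊔ adjoin k {β'} := by
  rw [← adjoin_union]; rfl

theorem finrank_adjoin_pair (D : Kummer a p q s β β') :
    Module.finrank k (adjoin k {β, β'}) = 8 := by
  rw [adjoin_pair, finrank_sup_sqrt _ D.β'_notMem, D.finrank_adjoin_β]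
  rw [D.adjoin_β]
  exact le_sup_left (a := adjoin k {s}) D.swap.β_sq_mem

end Kummer

/-! ### Galois action and quartic fields with octic normal closure -/

/-- A quartic extension whose normal closure inside `Ω` has degree 8. Over `ℚ` these are the
`D₄`-quartic fields. -/
def IsOctic (K : IntermediateField k Ω) : Prop :=
  Module.finrank k K = 4 ∧ Module.finrank k (normalClosure k K Ω) = 8

theorem IsOctic.not_normal {K : IntermediateField k Ω} (h : IsOctic K) : ¬Normal k K := by
  intro hn
  have h8 := h.2
  rw [normalClosure_of_normal, h.1] at h8
  omega

theorem neg_ne_self_of_ne_zero (k : Type*) {Ω : Type*} [Field k] [CharZero k] [Field Ω]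
    [Algebra k Ω] {x : Ω} (hx : x ≠ 0) : -x ≠ x := by
  have := charZero_of_injective_algebraMap (algebraMap k Ω).injective
  intro h
  exact hx (self_eq_neg.1 h.symm)

/-- If `s ∉ M` but `s² ∈ M`, the nontrivial automorphism of `M(s)` over `M` extends to `Ω`. -/
theorem exists_gal_neg {M : IntermediateField k Ω} {s : Ω} (hs : s ^ 2 ∈ M) (hsM : s ∉ M) :
    ∃ σ : Ω ≃ₐ[k] Ω, (∀ x ∈ M, σ x = x) ∧ σ s = -s := by
  have : IsGalois k Ω := ⟨⟩
  rw [← InfiniteGalois.fixedField_fixingSubgroup M, mem_fixedField_iff] at hsM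
  push Not at hsM
  obtain ⟨σ, hσ, hne⟩ := hsM
  rw [IntermediateField.mem_fixingSubgroup_iff] at hσ
  refine ⟨σ, hσ, (sq_eq_sq_iff_eq_or_eq_neg.1 ?_).resolve_left hne⟩
  rw [← map_pow, hσ _ hs]

theorem exists_gal_neg_bot {a : k} {s : Ω} (hs : s ^ 2 = algebraMap k Ω a) (ha : ¬IsSquare a) :
    ∃ σ : Ω ≃ₐ[k] Ω, σ s = -s :=
  (exists_gal_neg (M := ⊥) (hs ▸ ⟨a, rfl⟩) (notMem_bot_of_sq hs ha)).imp fun _ h => h.2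

theorem gal_sqrt {a : k} {s : Ω} (hs : s ^ 2 = algebraMap k Ω a) (σ : Ω ≃ₐ[k] Ω) :
    σ s = s ∨ σ s = -s :=
  sq_eq_sq_iff_eq_or_eq_neg.1 (by rw [← map_pow, hs, AlgEquiv.commutes])

theorem gal_β_of_neg {p q : k} {s β β' : Ω}
    (hβ : β ^ 2 = algebraMap k Ω p + algebraMap k Ω q * s)
    (hβ' : β' ^ 2 = algebraMap k Ω p - algebraMap k Ω q * s) {σ : Ω ≃ₐ[k] Ω} (h : σ s = -s) :
    σ β = β' ∨ σ β = -β' := by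
  refine sq_eq_sq_iff_eq_or_eq_neg.1 ?_
  rw [← map_pow, hβ, hβ', map_add, map_mul, AlgEquiv.commutes, AlgEquiv.commutes, h]
  ring

theorem gal_β_of_fix {p q : k} {s β : Ω}
    (hβ : β ^ 2 = algebraMap k Ω p + algebraMap k Ω q * s) {σ : Ω ≃ₐ[k] Ω} (h : σ s = s) :
    σ β = β ∨ σ β = -β := by
  refine sq_eq_sq_iff_eq_or_eq_neg.1 ?_
  rw [← map_pow, hβ, map_add, map_mul, AlgEquiv.commutes, AlgEquiv.commutes, h]

theorem gal_β_mem {a p q : k} {s β β' : Ω} (hs : s ^ 2 = algebraMap k Ω a)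
    (hβ : β ^ 2 = algebraMap k Ω p + algebraMap k Ω q * s)
    (hβ' : β' ^ 2 = algebraMap k Ω p - algebraMap k Ω q * s) {M : IntermediateField k Ω}
    (h : β ∈ M) (h' : β' ∈ M) (σ : Ω ≃ₐ[k] Ω) : σ β ∈ M := by
  rcases gal_sqrt hs σ with hσ | hσ
  · rcases gal_β_of_fix hβ hσ with e | e <;> rw [e]
    exacts [h, neg_mem h]
  · rcases gal_β_of_neg hβ hβ' hσ with e | e <;> rw [e]
    exacts [h', neg_mem h']

theorem normal_adjoin {S : Set Ω} (h : ∀ σ : Ω ≃ₐ[k] Ω, ∀ x ∈ S, σ x ∈ adjoin k S) :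
    Normal k (adjoin k S) := by
  rw [normal_iff_forall_map_le']
  intro σ
  rw [adjoin_map, adjoin_le_iff]
  rintro _ ⟨x, hx, rfl⟩
  exact h σ x hx

namespace Kummer

variable {a p q : k} {s β β' : Ω}

theorem normal_pair (D : Kummer a p q s β β') : Normal k (adjoin k {β, β'}) := by
  have h : β ∈ adjoin k {β, β'} := subset_adjoin k _ (by simp)
  have h' : β' ∈ adjoin k {β, β'} := subset_adjoin k _ (by simp)
  refine normal_adjoin fun σ x hx => ?_
  rcases hx with rfl | rfl
  · exact gal_β_mem D.hs D.hβ D.hβ' h h' σ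
  · exact gal_β_mem D.hs D.swap.hβ D.swap.hβ' h' h σ

theorem normalClosure_eq (D : Kummer a p q s β β') :
    normalClosure k (adjoin k {β}) Ω = adjoin k {β, β'} := by
  have := D.normal_pair
  refine le_antisymm ?_ ?_
  · rw [← normalClosure_of_normal (adjoin k {β, β'})]
    exact normalClosure_mono _ _ (adjoin.mono _ _ _ (by simp))
  · have hβ : β ∈ normalClosure k (adjoin k {β}) Ω :=
      le_normalClosure _ (mem_adjoin_simple_self k β)
    have hβ' : β' ∈ normalClosure k (adjoin k {β}) Ω := by
      obtain ⟨σ, hσ⟩ := exists_gal_neg_bot D.hs D.ha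
      have hm : σ β ∈ normalClosure k (adjoin k {β}) Ω :=
        normal_iff_forall_map_le'.1 inferInstance σ ⟨β, hβ, rfl⟩
      rcases gal_β_of_neg D.hβ D.hβ' hσ with e | e <;> rw [e] at hm
      exacts [hm, neg_mem_iff.1 hm]
    rw [adjoin_le_iff]
    rintro x (rfl | rfl)
    exacts [hβ, hβ']

theorem isOctic (D : Kummer a p q s β β') : IsOctic (adjoin k {β}) :=
  ⟨D.finrank_adjoin_β, by rw [D.normalClosure_eq, D.finrank_adjoin_pair]⟩

theorem adjoin_pair_dual_le (β β' : Ω) :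
    adjoin k {β + β', β - β'} ≤ adjoin k {β, β'} := by
  have h : β ∈ adjoin k {β, β'} := subset_adjoin k _ (by simp)
  have hb : β' ∈ adjoin k {β, β'} := subset_adjoin k _ (by simp)
  rw [adjoin_le_iff]
  rintro x (rfl | rfl)
  exacts [add_mem h hb, sub_mem h hb]

/-- A quartic field `M ⊆ k(β, β')` with octic normal closure contains `s` or `γ = ββ'`. Otherwise
`k(β, β') = M(s)`, and the involution `σ` fixing `M` with `σ s = -s` also negates `γ`. But
`σ s = -s` forces `σ β = ±β'`, and then `σ γ = ±β' σ β' = γ` because `σ² β = β`; this contradicts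
`σ γ = -γ`. -/
theorem s_mem_or_γ_mem (D : Kummer a p q s β β') {M : IntermediateField k Ω} (hM : IsOctic M)
    (hle : M ≤ adjoin k {β, β'}) : s ∈ M ∨ β * β' ∈ M := by
  by_contra! hcon
  obtain ⟨hsM, hγM⟩ := hcon
  have hβL : β ∈ adjoin k {β, β'} := subset_adjoin k _ (by simp)
  have hβL' : β' ∈ adjoin k {β, β'} := subset_adjoin k _ (by simp)
  have hs2 : s ^ 2 ∈ M := D.hs ▸ M.algebraMap_mem a
  have : FiniteDimensional k (adjoin k {β, β'}) :=
    Module.finite_of_finrank_pos (by rw [D.finrank_adjoin_pair]; norm_num)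
  have hL : M ⊔ adjoin k {s} = adjoin k {β, β'} := by
    refine eq_of_le_of_finrank_eq (sup_le hle ?_) ?_
    · rw [adjoin_simple_le_iff]; exact D.s_mem_of_β_mem hβL
    · rw [finrank_sup_sqrt hs2 hsM, hM.1, D.finrank_adjoin_pair]
  obtain ⟨σ, hσM, hσs⟩ := exists_gal_neg hs2 hsM
  have hσγ : σ (β * β') = -(β * β') := by
    obtain ⟨u, hu, v, hv, he⟩ := mem_sup_sqrt hs2 (hL ▸ mul_mem hβL hβL')
    rcases gal_sqrt D.hγ σ with h | h
    · rw [he, map_add, map_mul, hσM u hu, hσM v hv, hσs] at h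
      have hvs : v * s = 0 := by
        by_contra hne
        exact neg_ne_self_of_ne_zero k hne (by linear_combination h)
      rw [hvs, add_zero] at he
      exact absurd (he ▸ hu) hγM
    · exact h
  have hσσ : σ (σ β) = β := by
    obtain ⟨u, hu, v, hv, he⟩ := mem_sup_sqrt hs2 (hL ▸ hβL)
    rw [he]
    simp only [map_add, map_mul, hσM u hu, hσM v hv, hσs, map_neg, neg_neg]
  have hβ0 : β ≠ 0 := left_ne_zero_of_mul D.γ_ne_zero
  have hβ0' : β' ≠ 0 := right_ne_zero_of_mul D.γ_ne_zero
  refine neg_ne_self_of_ne_zero k hβ0 ?_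
  rw [map_mul] at hσγ
  apply mul_right_cancel₀ hβ0'
  rcases gal_β_of_neg D.hβ D.hβ' hσs with e | e
  · rw [e] at hσγ hσσ
    rw [hσσ] at hσγ
    linear_combination - hσγ
  · rw [e] at hσγ hσσ
    rw [map_neg] at hσσ
    linear_combination β' * hσσ - hσγ

end Kummer

theorem normal_of_finrank_two {F : IntermediateField k Ω} (h : Module.finrank k F = 2) :
    Normal k F := by
  have : Algebra.IsQuadraticExtension k F := ⟨h⟩
  infer_instance

/-- Two distinct quadratic subfields would have compositum `K`, which would then be normal. -/
theorem IsOctic.quadratic_unique {K F₁ F₂ : IntermediateField k Ω} (hK : IsOctic K)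
    (h₁ : F₁ ≤ K) (h₂ : F₂ ≤ K) (d₁ : Module.finrank k F₁ = 2) (d₂ : Module.finrank k F₂ = 2) :
    F₁ = F₂ := by
  have : FiniteDimensional k K := Module.finite_of_finrank_pos (by rw [hK.1]; norm_num)
  have hle : F₁ ⊔ F₂ ≤ K := sup_le h₁ h₂
  have hdvd := finrank_dvd_of_le_right hle
  have hdvd' := finrank_dvd_of_le_right (le_sup_left : F₁ ≤ F₁ ⊔ F₂)
  rw [hK.1] at hdvd
  rw [d₁] at hdvd'
  have hpos : Module.finrank k (F₁ ⊔ F₂ : IntermediateField k Ω) ≠ 0 := by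
    rintro h; rw [h] at hdvd; omega
  have : FiniteDimensional k (F₁ ⊔ F₂ : IntermediateField k Ω) :=
    Module.finite_of_finrank_pos (by omega)
  have := normal_of_finrank_two d₁
  have := normal_of_finrank_two d₂
  have h4 := Nat.le_of_dvd (by norm_num) hdvd
  by_cases h : Module.finrank k (F₁ ⊔ F₂ : IntermediateField k Ω) = 2
  · exact (eq_of_le_of_finrank_eq le_sup_left (d₁.trans h.symm)).trans
      (eq_of_le_of_finrank_eq le_sup_right (d₂.trans h.symm)).symm
  · have heq : F₁ ⊔ F₂ = K := eq_of_le_of_finrank_eq hle (by rw [hK.1]; omega)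
    exact absurd (heq ▸ inferInstance : Normal k K) hK.not_normal

/-- A quartic field over a quadratic subfield is generated by a square root: complete the square in
the minimal polynomial of any element outside `F`. -/
theorem exists_sqrt_of_finrank {F K : IntermediateField k Ω} (hle : F ≤ K)
    (hF : Module.finrank k F = 2) (hK : Module.finrank k K = 4) :
    ∃ β ∈ K, β ∉ F ∧ β ^ 2 ∈ F := by
  obtain ⟨x, hxK, hxF⟩ : ∃ x ∈ K, x ∉ F := by
    by_contra! h
    have : K = F := le_antisymm h hle
    rw [this] at hK; omega
  have hE : Module.finrank F (extendScalars hle) = 2 := by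
    have := Module.finrank_mul_finrank k F (extendScalars hle)
    have h4 : Module.finrank k (extendScalars hle) = 4 := hK
    rw [hF, h4] at this; omega
  have : FiniteDimensional F (extendScalars hle) := Module.finite_of_finrank_pos (by omega)
  let y : extendScalars hle := ⟨x, hxK⟩
  have hInt : IsIntegral F y := .of_finite F y
  have hdeg := minpoly.natDegree_le (A := F) y
  have hpos := minpoly.natDegree_pos hInt
  have hne : (minpoly F y).natDegree ≠ 1 := by
    rw [Ne, minpoly.natDegree_eq_one_iff]
    rintro ⟨z, hz⟩
    exact hxF (by rw [show x = z from congrArg Subtype.val hz.symm]; exact z.2)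
  have hd2 : (minpoly F y).natDegree = 2 := by omega
  have hm := minpoly.monic hInt
  have hq := Polynomial.eq_quadratic_of_degree_le_two
    (Polynomial.natDegree_le_iff_degree_le.1 hd2.le)
  have hlead : (minpoly F y).coeff 2 = 1 := by rw [← hd2]; exact hm
  have h0 := minpoly.aeval F y
  rw [hq, hlead] at h0
  set b := (minpoly F y).coeff 1
  set c := (minpoly F y).coeff 0
  have h0' : x ^ 2 + b * x + c = 0 := by
    have := congrArg (Subtype.val : extendScalars hle → Ω) h0
    simpa [y, Algebra.smul_def] using this
  have h2 : (2 : Ω) ≠ 0 := by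
    have := charZero_of_injective_algebraMap (algebraMap k Ω).injective
    exact two_ne_zero
  have hb2 : (b : Ω) / 2 ∈ F := div_mem b.2 (ofNat_mem F 2)
  refine ⟨x + b / 2, add_mem hxK (hle hb2), fun h => hxF ?_, ?_⟩
  · simpa using sub_mem h hb2
  · rw [show (x + (b : Ω) / 2) ^ 2 = (b / 2 : Ω) ^ 2 - c by
      field_simp; linear_combination 4 * h0']
    exact sub_mem (pow_mem hb2 2) c.2

/-- Every quartic field with octic normal closure and quadratic subfield `k(s)` comes from Kummer
data. If `c` or `ac` were a square, then `ββ'` would lie in `k(s) ⊆ K`, so `β'` would lie in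
`K`, and `K` would be normal. -/
theorem IsOctic.exists_kummer {K : IntermediateField k Ω} (hK : IsOctic K) {a : k} {s : Ω}
    (hs : s ^ 2 = algebraMap k Ω a) (ha : ¬IsSquare a) (hsK : s ∈ K) :
    ∃ (p q : k) (β β' : Ω), β ∈ K ∧ Kummer a p q s β β' := by
  have hle : adjoin k {s} ≤ K := by rwa [adjoin_simple_le_iff]
  have hF := finrank_adjoin_sqrt hs ha
  obtain ⟨β, hβK, hβF, hβ2⟩ := exists_sqrt_of_finrank hle hF hK.1
  obtain ⟨p, q, hβ⟩ := mem_adjoin_sqrt hs hβ2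
  -- A conjugate of `β` under any `σ` with `σ s = -s` serves as `β'`.
  obtain ⟨σ, hσ⟩ := exists_gal_neg_bot hs ha
  have hβ' : σ β ^ 2 = algebraMap k Ω p - algebraMap k Ω q * s := by
    rw [← map_pow, hβ, map_add, map_mul, AlgEquiv.commutes, AlgEquiv.commutes, hσ]; ring
  have : FiniteDimensional k K := Module.finite_of_finrank_pos (by rw [hK.1]; norm_num)
  have hKeq : K = adjoin k {s, β} := by
    rw [Kummer.adjoin_pair, eq_comm]
    refine eq_of_le_of_finrank_eq (sup_le hle (by rwa [adjoin_simple_le_iff])) ?_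
    rw [finrank_sup_sqrt hβ2 hβF, hF, hK.1]
  have hβ0 : β ≠ 0 := fun h => hβF (h ▸ zero_mem _)
  have key : β * σ β ∉ K := by
    intro hγ
    have hβK' : σ β ∈ K := by
      simpa [hβ0] using div_mem hγ hβK
    refine hK.not_normal ?_
    rw [hKeq] at hsK hβK hβK' ⊢
    refine normal_adjoin fun τ x hx => ?_
    rcases hx with rfl | rfl
    · rcases gal_sqrt hs τ with e | e <;> rw [e]
      exacts [hsK, neg_mem hsK]
    · exact gal_β_mem hs hβ hβ' hβK hβK' τ
  have hγ : (β * σ β) ^ 2 = algebraMap k Ω (p ^ 2 - a * q ^ 2) := by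
    rw [mul_pow, hβ, hβ', map_sub, map_mul, map_pow, map_pow]
    linear_combination - algebraMap k Ω q ^ 2 * hs
  refine ⟨p, q, β, σ β, hβK, hs, hβ, hβ', ha, ?_, ?_⟩
  · rintro ⟨t, ht⟩
    rw [ht, map_mul, ← sq] at hγ
    refine key ?_
    rcases sq_eq_sq_iff_eq_or_eq_neg.1 hγ with e | e <;> rw [e]
    exacts [K.algebraMap_mem t, neg_mem (K.algebraMap_mem t)]
  · rintro ⟨t, ht⟩
    have ha0 : a ≠ 0 := fun h => ha (h ▸ IsSquare.zero)
    have hm : algebraMap k Ω (t / a) * s ∈ K := mul_mem (K.algebraMap_mem _) hsK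
    have hγ' : (β * σ β) ^ 2 = (algebraMap k Ω (t / a) * s) ^ 2 := by
      rw [hγ, mul_pow, hs, ← map_pow, ← map_mul]
      congr 1
      field_simp
      linear_combination ht
    refine key ?_
    rcases sq_eq_sq_iff_eq_or_eq_neg.1 hγ' with e | e <;> rw [e]
    exacts [hm, neg_mem hm]

end Biquadratic

/-! ### The norm criterion over the rationals -/

theorem not_isSquare_of_squarefree {a : ℤ} (ha : Squarefree a) (ha1 : a ≠ 1) :
    ¬IsSquare (a : ℚ) := by
  rw [Rat.isSquare_intCast_iff]
  rintro ⟨n, rfl⟩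
  rcases Int.isUnit_iff.1 (ha n dvd_rfl) with rfl | rfl <;> simp at ha1

theorem not_isSquare_mul_of_squarefree {a b : ℤ} (ha : Squarefree a) (hb : Squarefree b)
    (hab : a ≠ b) : ¬IsSquare ((a : ℚ) * b) := by
  rw [← Int.cast_mul, Rat.isSquare_intCast_iff]
  rintro ⟨n, hn⟩
  have hdvd : a ∣ n ^ 2 := ⟨b, by rw [hn]; ring⟩
  obtain ⟨m, rfl⟩ := (ha.dvd_pow_iff_dvd two_ne_zero).1 hdvd
  have hbm : b = a * (m * m) := mul_left_cancel₀ ha.ne_zero (by rw [hn]; ring)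
  have hm : m * m = 1 := by
    rcases Int.isUnit_iff.1 (hb m ⟨a, by rw [hbm]; ring⟩) with rfl | rfl <;> norm_num
  exact hab (by rw [hbm, hm, mul_one])

/-- The field `ℚ(ββ')` is an extended quadratic field of `K` by duality, so it is `ℚ(√b)`. Hence
`ββ' = u + v√b`, and squaring gives `u = 0` and `c = b v²`. -/
theorem norm_of_nonempty {a b : ℚ} {sa sb : Qbar} (hsa : sa ^ 2 = algebraMap ℚ Qbar a)
    (hsb : sb ^ 2 = algebraMap ℚ Qbar b) (ha : ¬IsSquare a) (hb : ¬IsSquare b)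
    (h : (F4a sa sb).Nonempty) : ∃ x y : ℚ, x ^ 2 - a * y ^ 2 = b := by
  obtain ⟨K, ⟨hD4, -, hext⟩, hsK, -⟩ := h
  rw [adjoin_simple_le_iff] at hsK
  obtain ⟨p, q, β, β', hβK, D⟩ :=
    IsOctic.exists_kummer (K := K) ((isD4Quartic_iff K).1 hD4) hsa ha hsK
  have hγ : ExtendedQuadratic K (adjoin ℚ {β * β'}) := by
    have hle : adjoin ℚ {β * β'} ≤ adjoin ℚ {β + β'} := by
      rw [adjoin_simple_le_iff]
      exact D.dual.s_mem_of_β_mem (mem_adjoin_simple_self ℚ _)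
    have hle' : adjoin ℚ {β + β'} ≤ galCl K := calc
      adjoin ℚ {β + β'} ≤ adjoin ℚ {β + β', β - β'} := adjoin.mono _ _ _ (by simp)
      _ ≤ adjoin ℚ {β, β'} := Kummer.adjoin_pair_dual_le β β'
      _ = galCl (adjoin ℚ {β}) := D.normalClosure_eq.symm
      _ ≤ galCl K := normalClosure_mono _ _ (by rwa [adjoin_simple_le_iff])
    exact ⟨hle.trans hle', finrank_adjoin_sqrt D.hγ D.hc, _,
      (isD4Quartic_iff _).2 D.dual.isOctic, hle', hle⟩
  rcases (hext _).1 hγ with h | h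
  · exact absurd (h ▸ mem_adjoin_simple_self ℚ _) D.γ_notMem
  · obtain ⟨u, v, he⟩ := mem_adjoin_sqrt hsb (h ▸ mem_adjoin_simple_self ℚ (β * β'))
    obtain ⟨h1, h2⟩ := coord_eq (notMem_bot_of_sq hsb hb) (u := u ^ 2 + b * v ^ 2)
      (v := 2 * u * v) (u' := p ^ 2 - a * q ^ 2) (v' := 0) (by
        rw [← D.hγ, he]
        simp only [map_add, map_mul, map_pow, map_ofNat, map_zero]
        linear_combination - algebraMap ℚ Qbar v ^ 2 * hsb)
    have hv : v ≠ 0 := by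
      rintro rfl
      exact D.hc ⟨u, by rw [← h1]; ring⟩
    have hu : u = 0 := by simpa [hv] using h2
    subst hu
    refine ⟨p / v, q / v, ?_⟩
    field_simp
    linear_combination -h1

/-- For `b = x² - a y²`, the field generated by `β = √(x + y√a)` belongs to `𝓕_{4,a}(a,b)`. -/
theorem nonempty_of_norm {a b : ℚ} {sa sb : Qbar} (hsa : sa ^ 2 = algebraMap ℚ Qbar a)
    (hsb : sb ^ 2 = algebraMap ℚ Qbar b) (ha : ¬IsSquare a) (hb : ¬IsSquare b)
    (hab : ¬IsSquare (a * b)) (h : ∃ x y : ℚ, x ^ 2 - a * y ^ 2 = b) :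
    (F4a sa sb).Nonempty := by
  obtain ⟨x, y, rfl⟩ := h
  obtain ⟨β, hβ⟩ := IsAlgClosed.exists_pow_nat_eq
    (algebraMap ℚ Qbar x + algebraMap ℚ Qbar y * sa) (n := 2) (by norm_num)
  have hsb0 : sb ≠ 0 := by
    rintro rfl
    rw [zero_pow two_ne_zero, eq_comm, map_eq_zero] at hsb
    exact hb (hsb ▸ IsSquare.zero)
  have hN : (algebraMap ℚ Qbar x + algebraMap ℚ Qbar y * sa)
      * (algebraMap ℚ Qbar x - algebraMap ℚ Qbar y * sa) = sb ^ 2 := by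
    rw [hsb, map_sub, map_mul, map_pow, map_pow]
    linear_combination - algebraMap ℚ Qbar y ^ 2 * hsa
  have hβ0 : β ≠ 0 := by
    rintro rfl
    rw [← hβ, zero_pow two_ne_zero, zero_mul] at hN
    exact pow_ne_zero 2 hsb0 hN.symm
  -- Choosing `β' = √b / β` makes `ββ'` equal to the prescribed square root of `b`.
  have D : Kummer a x y sa β (sb / β) := by
    refine ⟨hsa, hβ, ?_, ha, hb, hab⟩
    rw [div_pow, div_eq_iff (pow_ne_zero 2 hβ0), ← hN, hβ, mul_comm]
  have hsb' : β * (sb / β) = sb := mul_div_cancel₀ _ hβ0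
  set β' := sb / β
  have hcl : galCl (adjoin ℚ {β}) = adjoin ℚ {β, β'} := D.normalClosure_eq
  have hD4 : IsD4Quartic (adjoin ℚ {β}) := (isD4Quartic_iff _).2 D.isOctic
  have hβL : β ∈ galCl (adjoin ℚ {β}) := hcl ▸ subset_adjoin ℚ _ (by simp)
  have hβL' : β' ∈ galCl (adjoin ℚ {β}) := hcl ▸ subset_adjoin ℚ _ (by simp)
  have hsaL := D.s_mem_of_β_mem hβL
  have hsbL : sb ∈ galCl (adjoin ℚ {β}) := hsb' ▸ mul_mem hβL hβL'
  have hsaK : adjoin ℚ {sa} ≤ adjoin ℚ {β} := by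
    rw [adjoin_simple_le_iff]
    exact D.s_mem_of_β_mem (mem_adjoin_simple_self ℚ β)
  have hda := finrank_adjoin_sqrt hsa ha
  have hdb := finrank_adjoin_sqrt hsb hb
  refine ⟨adjoin ℚ {β}, ⟨hD4, ?_, fun F => ⟨?_, ?_⟩⟩, hsaK,
    fun F hF hF2 => D.isOctic.quadratic_unique hF hsaK hF2 hda⟩
  · rw [adjoin_le_iff]
    rintro z (rfl | rfl)
    exacts [hsaL, hsbL]
  · rintro ⟨-, hF2, K', hK', hK'L, hFK'⟩
    have hoct := (isD4Quartic_iff K').1 hK'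
    rcases D.s_mem_or_γ_mem hoct (hcl ▸ hK'L) with hm | hm
    · exact .inl (IsOctic.quadratic_unique hoct hFK' (by rwa [adjoin_simple_le_iff]) hF2 hda)
    · rw [hsb'] at hm
      exact .inr (IsOctic.quadratic_unique hoct hFK' (by rwa [adjoin_simple_le_iff]) hF2 hdb)
  · rintro (rfl | rfl)
    · exact ⟨by rwa [adjoin_simple_le_iff], hda, _, hD4, le_normalClosure _, hsaK⟩
    · refine ⟨by rwa [adjoin_simple_le_iff], hdb, adjoin ℚ {β + β'},
        (isD4Quartic_iff _).2 D.dual.isOctic, ?_, ?_⟩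
      · rw [adjoin_simple_le_iff]; exact add_mem hβL hβL'
      · rw [adjoin_simple_le_iff, ← hsb']
        exact D.dual.s_mem_of_β_mem (mem_adjoin_simple_self ℚ _)

/-- Proposition 3.3: `𝓕_{4,a}(a,b)` is nonempty iff `b` is a norm
from `ℚ(√a)`, i.e. iff `x² − a y² = b` has a rational solution. -/
theorem F4a_nonempty_iff_norm
    (a b : ℤ) (ha : Squarefree a) (hb : Squarefree b) (hab : a ≠ b)
    (ha0 : a ≠ 0) (ha1 : a ≠ 1) (hb0 : b ≠ 0) (hb1 : b ≠ 1)
    (sa sb : Qbar) (hsa : sa ^ 2 = (a : Qbar)) (hsb : sb ^ 2 = (b : Qbar)) :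
    (F4a sa sb).Nonempty ↔ ∃ x y : ℚ, x ^ 2 - (a : ℚ) * y ^ 2 = (b : ℚ) := by
  have hsa' : sa ^ 2 = algebraMap ℚ Qbar a := by rw [hsa, map_intCast]
  have hsb' : sb ^ 2 = algebraMap ℚ Qbar b := by rw [hsb, map_intCast]
  have ha' := not_isSquare_of_squarefree ha ha1
  have hb' := not_isSquare_of_squarefree hb hb1
  exact ⟨norm_of_nonempty hsa' hsb' ha' hb',
    nonempty_of_norm hsa' hsb' ha' hb' (not_isSquare_mul_of_squarefree ha hb hab)⟩
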